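/- arXiv:2605.22451 — 2 statements merged into one kernel-verified Lean document; each statement's English description precedes it below -/
import Mathlib

section
/- Let f : ℝⁿ → ℝ be continuous and positive-valued with epigraph L, and let K ⊆ ℝⁿ × ℝ be a nonempty closed set disjoint from L containing a point (x₀,y₀) with y₀ ≤ 0. Fix x ∈ ℝⁿ and suppose there is exactly one G(x) ∈ ℝ with d((x,G(x)),K) = d((x,G(x)),L). Then for every y ∈ ℝ: d((x,y),K) < d((x,y),L) implies y < G(x), and d((x,y),K) > d((x,y),L) implies y > G(x). -/
open Metric Set

noncomputable section

/-- `ℝⁿ × ℝ` with the Euclidean (ℓ²) metric. -/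
abbrev EucProd (n : ℕ) := WithLp 2 (EuclideanSpace ℝ (Fin n) × ℝ)

/-- The point of `ℝⁿ × ℝ` with first component `x` and last coordinate `y`. -/
def pt {n : ℕ} (x : EuclideanSpace ℝ (Fin n)) (y : ℝ) : EucProd n :=
  (WithLp.equiv 2 (EuclideanSpace ℝ (Fin n) × ℝ)).symm (x, y)

/-- The epigraph of `f : ℝⁿ → ℝ`, viewed as a subset of `ℝⁿ × ℝ`. -/
def epigraph {n : ℕ} (f : EuclideanSpace ℝ (Fin n) → ℝ) : Set (EucProd n) :=
  {p | f ((WithLp.equiv 2 (EuclideanSpace ℝ (Fin n) × ℝ)) p).1 ≤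
      ((WithLp.equiv 2 (EuclideanSpace ℝ (Fin n) × ℝ)) p).2}

theorem pt_dist {n : ℕ} (x z : EuclideanSpace ℝ (Fin n)) (y w : ℝ) :
    dist (pt x y) (pt z w) = Real.sqrt (dist x z ^ 2 + (y - w) ^ 2) := by
  rw [WithLp.prod_dist_eq_of_L2]
  simp [pt, Real.dist_eq, sq_abs]

theorem pt_surj {n : ℕ} (p : EucProd n) : ∃ x y, p = pt x y :=
  ⟨p.fst, p.snd, rfl⟩

theorem pt_continuous {n : ℕ} (x : EuclideanSpace ℝ (Fin n)) :
    Continuous (fun y : ℝ => pt x y) := by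
  refine (LipschitzWith.of_dist_le_mul (K := 1) fun a b => ?_).continuous
  rw [pt_dist]
  simp [Real.sqrt_sq_eq_abs, Real.dist_eq]

theorem mem_epi {n : ℕ} (f : EuclideanSpace ℝ (Fin n) → ℝ)
    (x : EuclideanSpace ℝ (Fin n)) (y : ℝ) : pt x y ∈ epigraph f ↔ f x ≤ y := Iff.rfl

theorem low_point {n : ℕ} (f : EuclideanSpace ℝ (Fin n) → ℝ) (hf : Continuous f)
    (hfpos : ∀ x, 0 < f x) (K : Set (EucProd n))
    (x₀ : EuclideanSpace ℝ (Fin n)) (y₀ : ℝ) (hx₀ : pt x₀ y₀ ∈ K) (hy₀ : y₀ ≤ 0)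
    (x : EuclideanSpace ℝ (Fin n)) (b : ℝ) :
    ∃ y ≤ b, infDist (pt x y) K < infDist (pt x y) (epigraph f) := by
  set R := dist x x₀ + 1 with hR
  have hr : 0 ≤ dist x x₀ := dist_nonneg
  obtain ⟨m, -, hm⟩ := (isCompact_closedBall x R).exists_isMinOn
    ⟨x, mem_closedBall_self (by linarith)⟩ hf.continuousOn
  have hε := hfpos m
  set ε := f m
  obtain ⟨Y, hY⟩ : ∃ Y, Y = max (max (-y₀) (-b)) (R ^ 2 / (2 * ε)) := ⟨_, rfl⟩
  have h1 : -y₀ ≤ Y := hY ▸ (le_max_left _ _).trans (le_max_left _ _)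
  have h2 : -b ≤ Y := hY ▸ (le_max_right _ _).trans (le_max_left _ _)
  have h3 : R ^ 2 / (2 * ε) ≤ Y := hY ▸ le_max_right _ _
  rw [div_le_iff₀ (by positivity)] at h3
  refine ⟨-Y, by linarith, ?_⟩
  have hK : infDist (pt x (-Y)) K ≤ Real.sqrt (dist x x₀ ^ 2 + Y ^ 2) := by
    refine (infDist_le_dist_of_mem hx₀).trans ?_
    rw [pt_dist]
    apply Real.sqrt_le_sqrt
    nlinarith
  refine hK.trans_lt (lt_of_lt_of_le (b := Real.sqrt (R ^ 2 + Y ^ 2)) ?_ ?_)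
  · apply Real.sqrt_lt_sqrt (by positivity)
    nlinarith
  · refine (le_infDist ⟨pt x (f x), (mem_epi _ _ _).2 le_rfl⟩).2 fun p hp => ?_
    obtain ⟨z, w, rfl⟩ := pt_surj p
    rw [mem_epi] at hp
    rw [pt_dist]
    apply Real.sqrt_le_sqrt
    have hz := hfpos z
    by_cases hzR : dist z x ≤ R
    · have h4 : ε ≤ f z := hm (mem_closedBall.2 hzR)
      have h5 : 0 ≤ dist x z ^ 2 := by positivity
      have h6 : Y * ε ≤ Y * w := mul_le_mul_of_nonneg_left (h4.trans hp) (by linarith)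
      nlinarith
    · push Not at hzR
      rw [dist_comm] at hzR
      have h6 : 0 ≤ Y * w := mul_nonneg (by linarith) (by linarith)
      nlinarith

theorem stmt3 {n : ℕ} (f : EuclideanSpace ℝ (Fin n) → ℝ) (hf : Continuous f)
    (hfpos : ∀ x, 0 < f x)
    (L : Set (EucProd n)) (hL : L = epigraph f)
    (K : Set (EucProd n)) (hKcl : IsClosed K) (hKne : K.Nonempty)
    (hdisj : K ∩ L = ∅)
    (x₀ : EuclideanSpace ℝ (Fin n)) (y₀ : ℝ) (hx₀ : pt x₀ y₀ ∈ K) (hy₀ : y₀ ≤ 0)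
    (x : EuclideanSpace ℝ (Fin n)) (Gx : ℝ)
    (hGx : Metric.infDist (pt x Gx) K = Metric.infDist (pt x Gx) L)
    (huniq : ∀ y : ℝ, Metric.infDist (pt x y) K = Metric.infDist (pt x y) L → y = Gx) :
    ∀ y : ℝ,
      (Metric.infDist (pt x y) K < Metric.infDist (pt x y) L → y < Gx) ∧
      (Metric.infDist (pt x y) L < Metric.infDist (pt x y) K → Gx < y) := by
  have cK : Continuous fun y => infDist (pt x y) K :=
    (continuous_infDist_pt K).comp (pt_continuous x)
  have cL : Continuous fun y => infDist (pt x y) L :=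
    (continuous_infDist_pt L).comp (pt_continuous x)
  intro y
  constructor
  · intro h
    by_contra! hy
    have hyG : y ≠ Gx := by rintro rfl; exact h.ne hGx
    set t := max y (f x)
    have ht : pt x t ∈ L := hL ▸ (mem_epi _ _ _).2 (le_max_right _ _)
    have ht0 : infDist (pt x t) L ≤ infDist (pt x t) K := by
      rw [infDist_zero_of_mem ht]; exact infDist_nonneg
    obtain ⟨s, hs, hse⟩ := isPreconnected_Icc.intermediate_value₂
      (left_mem_Icc.2 (le_max_left y (f x))) (right_mem_Icc.2 (le_max_left y (f x)))
      cK.continuousOn cL.continuousOn h.le ht0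
    have := huniq s hse
    exact hyG (le_antisymm (this ▸ hs.1) hy)
  · intro h
    by_contra! hy
    have hyG : y ≠ Gx := by rintro rfl; exact h.ne' hGx
    obtain ⟨t, hty, ht⟩ := low_point f hf hfpos K x₀ y₀ hx₀ hy₀ x y
    rw [← hL] at ht
    obtain ⟨s, hs, hse⟩ := isPreconnected_Icc.intermediate_value₂
      (left_mem_Icc.2 hty) (right_mem_Icc.2 hty)
      cK.continuousOn cL.continuousOn ht.le h.le
    have := huniq s hse
    exact hyG (le_antisymm hy (this ▸ hs.2))

end
end

section
/- Let f : ℝⁿ → ℝ be continuous and positive-valued with epigraph L, and let K ⊆ ℝⁿ × ℝ be a nonempty closed set disjoint from L containing a point (x₀,y₀) with y₀ ≤ 0. If for every x ∈ ℝⁿ there is exactly one G(x) ∈ ℝ with d((x,G(x)),K) = d((x,G(x)),L), then the function G : ℝⁿ → ℝ is continuous. -/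
open Metric Set

noncomputable section

theorem dist_pt {n : ℕ} (x : EuclideanSpace ℝ (Fin n)) (y : ℝ) (p : EucProd n) :
    dist (pt x y) p = Real.sqrt (dist x p.fst ^ 2 + dist y p.snd ^ 2) :=
  WithLp.prod_dist_eq_of_L2 _ _

theorem continuous_pt {n : ℕ} :
    Continuous (fun q : EuclideanSpace ℝ (Fin n) × ℝ => pt q.1 q.2) :=
  WithLp.prod_continuous_toLp 2 _ _

theorem stmt5 {n : ℕ} (f : EuclideanSpace ℝ (Fin n) → ℝ) (hf : Continuous f)
    (hfpos : ∀ x, 0 < f x)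
    (L : Set (EucProd n)) (hL : L = epigraph f)
    (K : Set (EucProd n)) (hKcl : IsClosed K) (hKne : K.Nonempty)
    (hdisj : K ∩ L = ∅)
    (x₀ : EuclideanSpace ℝ (Fin n)) (y₀ : ℝ) (hx₀ : pt x₀ y₀ ∈ K) (hy₀ : y₀ ≤ 0)
    (G : EuclideanSpace ℝ (Fin n) → ℝ)
    (hG : ∀ x, Metric.infDist (pt x (G x)) K = Metric.infDist (pt x (G x)) L)
    (huniq : ∀ x, ∀ y : ℝ,
      Metric.infDist (pt x y) K = Metric.infDist (pt x y) L → y = G x) :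
    Continuous G := by
  have memL : ∀ p : EucProd n, p ∈ L ↔ f p.fst ≤ p.snd := by
    intro p; rw [hL]; rfl
  have ptL : ∀ x y, f x ≤ y → pt x y ∈ L := fun x y h => (memL _).2 h
  have hLne : L.Nonempty := ⟨_, ptL x₀ (f x₀) le_rfl⟩
  obtain ⟨h, hh⟩ : ∃ h : EuclideanSpace ℝ (Fin n) → ℝ → ℝ,
      ∀ x y, h x y = infDist (pt x y) K - infDist (pt x y) L := ⟨_, fun _ _ => rfl⟩
  have hcont : Continuous (fun q : EuclideanSpace ℝ (Fin n) × ℝ => h q.1 q.2) := by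
    simp only [hh]
    exact ((continuous_infDist_pt K).comp continuous_pt).sub
      ((continuous_infDist_pt L).comp continuous_pt)
  have hcy : ∀ x, Continuous (h x) := fun x =>
    hcont.comp (Continuous.prodMk continuous_const continuous_id)
  have hcx : ∀ y, Continuous (fun x => h x y) := fun y =>
    hcont.comp (Continuous.prodMk continuous_id continuous_const)
  have hzero : ∀ x y, h x y = 0 → y = G x := fun x y e => huniq x y (sub_eq_zero.1 ((hh x y).symm.trans e))
  have hup : ∀ x y, f x ≤ y → 0 < h x y := by
    intro x y hxy
    have h1 : infDist (pt x y) L = 0 := infDist_zero_of_mem (ptL x y hxy)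
    have h2 : pt x y ∉ K := fun hk => by
      have : pt x y ∈ K ∩ L := ⟨hk, ptL x y hxy⟩
      rw [hdisj] at this
      exact this
    have h3 := (hKcl.notMem_iff_infDist_pos hKne).1 h2
    simp only [hh, h1, sub_zero]
    exact h3
  have hlow : ∀ x, ∃ M, ∀ y, y ≤ M → h x y < 0 := by
    intro x
    obtain ⟨R, hR⟩ : ∃ R, R = dist x x₀ + 1 := ⟨_, rfl⟩
    have hd : 0 ≤ dist x x₀ := dist_nonneg
    have hR0 : 0 < R := by linarith
    obtain ⟨z₀, -, hz₀⟩ := (isCompact_closedBall x R).exists_isMinOn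
      ⟨x, mem_closedBall_self hR0.le⟩ hf.continuousOn
    have hε := hfpos z₀
    obtain ⟨ε, hεe⟩ : ∃ ε, ε = f z₀ := ⟨_, rfl⟩
    rw [← hεe] at hε
    refine ⟨min y₀ (-(R ^ 2 / (2 * ε))), fun y hy => ?_⟩
    have hy1 : y ≤ y₀ := hy.trans (min_le_left _ _)
    have hy2 : R ^ 2 ≤ -y * (2 * ε) := by
      have : R ^ 2 / (2 * ε) ≤ -y := by linarith [hy.trans (min_le_right _ _)]
      rwa [div_le_iff₀ (by positivity)] at this
    have hK : infDist (pt x y) K ≤ Real.sqrt (dist x x₀ ^ 2 + y ^ 2) := by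
      refine (infDist_le_dist_of_mem hx₀).trans ?_
      rw [dist_pt]
      apply Real.sqrt_le_sqrt
      have : dist y (pt x₀ y₀).snd ^ 2 = (y - y₀) ^ 2 := by
        rw [Real.dist_eq, sq_abs]; rfl
      rw [this]
      have e2 : (pt x₀ y₀).fst = x₀ := rfl
      rw [e2]
      nlinarith
    have hL' : Real.sqrt (R ^ 2 + y ^ 2) ≤ infDist (pt x y) L := by
      rw [le_infDist hLne]
      intro p hp
      have hp' := (memL p).1 hp
      rw [dist_pt]
      apply Real.sqrt_le_sqrt
      rw [Real.dist_eq, sq_abs]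
      have hw := hfpos p.fst
      have hy0 : y ≤ 0 := hy1.trans hy₀
      have hdz : 0 ≤ dist x p.fst := dist_nonneg
      by_cases hc : R ≤ dist x p.fst
      · have : R ^ 2 ≤ dist x p.fst ^ 2 := by gcongr
        nlinarith
      · have hm : ε ≤ f p.fst := hεe.trans_le <| hz₀ (by
          rw [mem_closedBall, dist_comm]; exact (not_le.1 hc).le)
        nlinarith [mul_nonneg (sub_nonneg.2 (hm.trans hp')) (neg_nonneg.2 hy0),
          sq_nonneg p.snd, sq_nonneg (dist x p.fst)]
    have hlt : Real.sqrt (dist x x₀ ^ 2 + y ^ 2) < Real.sqrt (R ^ 2 + y ^ 2) := by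
      apply Real.sqrt_lt_sqrt (by positivity)
      nlinarith
    simp only [hh]
    linarith
  have hpos : ∀ x y, G x < y → 0 < h x y := by
    intro x y hy
    by_contra hc
    obtain ⟨t, ht, ht0⟩ := intermediate_value_Icc (le_max_left y (f x))
      (hcy x).continuousOn ⟨not_lt.1 hc, (hup x _ (le_max_right y (f x))).le⟩
    have := hzero x t ht0
    linarith [ht.1]
  have hneg : ∀ x y, y < G x → h x y < 0 := by
    intro x y hy
    by_contra hc
    obtain ⟨M, hM⟩ := hlow x
    obtain ⟨t, ht, ht0⟩ := intermediate_value_Icc (min_le_left y M)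
      (hcy x).continuousOn ⟨(hM _ (min_le_right y M)).le, not_lt.1 hc⟩
    have := hzero x t ht0
    linarith [ht.2]
  rw [continuous_iff_continuousAt]
  intro x
  refine tendsto_order.2 ⟨fun a ha => ?_, fun b hb => ?_⟩
  · filter_upwards [(hcx a).continuousAt.eventually_lt continuousAt_const (hneg x a ha)]
      with z hz
    rcases lt_trichotomy a (G z) with h1 | h1 | h1
    · exact h1
    · have : h z a = 0 := by rw [h1]; exact (hh _ _).trans (sub_eq_zero.2 (hG z))
      linarith
    · linarith [hpos z a h1]
  · filter_upwards [continuousAt_const.eventually_lt (hcx b).continuousAt (hpos x b hb)]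
      with z hz
    rcases lt_trichotomy (G z) b with h1 | h1 | h1
    · exact h1
    · have : h z b = 0 := by rw [← h1]; exact (hh _ _).trans (sub_eq_zero.2 (hG z))
      linarith
    · linarith [hneg z b h1]

end
end
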